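/- Let A = (a, b; c, d) be a 2×2 real matrix with strictly positive entries, set C = max{a+c, b+d, 1/(a+c), 1/(b+d)} and θ = arcsin( |a+c−b−d| / (a+b+c+d) ). Then for every z ∈ D and every t ∈ ℂ, |w_A(z)^t| ≤ exp( |t| · √((log C)² + θ²) ), where w^t = exp(t · Log w) is the complex power defined via the principal branch of the logarithm. -/

import Mathlib

open Complex

/-- The complex affine map `w_A(z) = (a+c−b−d)z + b + d`. -/
noncomputable def wC (a b c d : ℝ) (z : ℂ) : ℂ :=
  ((a : ℂ) + c - b - d) * z + b + d

/-!
The value `w_A(z)` lies in the closed disc having as diameter the real segment between the column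
sums `p = a + c` and `q = b + d`. On this disc the modulus stays between `p` and `q`. The tangents
to the disc from the origin make the angle `arcsin (|p - q| / (p + q))` with the real axis, which
bounds the argument. So both the real and the imaginary part of `Log w_A(z)` are controlled, hence
also `|Log w_A(z)|`, and `|w ^ t| ≤ exp |t * Log w| = exp (|t| * |Log w|)`.
-/

theorem dist_wC (a b c d : ℝ) (z z' : ℂ) :
    dist (wC a b c d z) (wC a b c d z') = |a + c - b - d| * dist z z' := by
  have hsub : wC a b c d z - wC a b c d z' = ((a + c - b - d : ℝ) : ℂ) * (z - z') := by
    simp only [wC]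
    push_cast
    ring
  rw [dist_eq_norm, hsub, norm_mul, norm_real, Real.norm_eq_abs, dist_eq_norm]

theorem wC_one_half (a b c d : ℝ) :
    wC a b c d (1 / 2) = (((a + c + (b + d)) / 2 : ℝ) : ℂ) := by
  simp only [wC]
  push_cast
  ring

theorem norm_mem_uIcc_of_mem_closedBall {E : Type*} [SeminormedAddCommGroup E] {p q : ℝ} {v w : E}
    (hv : ‖v‖ = (p + q) / 2) (hw : w ∈ Metric.closedBall v (|p - q| / 2)) :
    ‖w‖ ∈ Set.uIcc p q := by
  have hnorm : |‖w‖ - (p + q) / 2| ≤ |p - q| / 2 :=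
    hv ▸ (abs_norm_sub_norm_le w v).trans (mem_closedBall_iff_norm.1 hw)
  obtain ⟨hlower, hupper⟩ := abs_le.1 hnorm
  rw [Set.mem_uIcc]
  rcases abs_cases (p - q) with ⟨habs, -⟩ | ⟨habs, -⟩
  · exact Or.inr ⟨by linarith, by linarith⟩
  · exact Or.inl ⟨by linarith, by linarith⟩

theorem abs_log_le_log_max_of_mem_uIcc {p q x : ℝ} (hp : 0 < p) (hq : 0 < q)
    (hx : x ∈ Set.uIcc p q) :
    |Real.log x| ≤ Real.log (max (max p q) (max (1 / p) (1 / q))) := by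
  have hmin : 0 < min p q := lt_min hp hq
  have hx₀ : 0 < x := hmin.trans_le hx.1
  have hinv : x⁻¹ ≤ max (1 / p) (1 / q) := by
    rcases Set.mem_uIcc.1 hx with ⟨hpx, -⟩ | ⟨hqx, -⟩
    · exact le_max_of_le_left (one_div p ▸ inv_anti₀ hp hpx)
    · exact le_max_of_le_right (one_div q ▸ inv_anti₀ hq hqx)
  refine abs_le'.2 ⟨Real.log_le_log hx₀ (le_max_of_le_left hx.2), ?_⟩
  rw [← Real.log_inv]
  exact Real.log_le_log (inv_pos.2 hx₀) (le_max_of_le_right hinv)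

theorem abs_im_mul_le_mul_norm_of_mem_closedBall {m r : ℝ} {w : ℂ} (hrm : r ≤ m)
    (hw : w ∈ Metric.closedBall (m : ℂ) r) : |w.im| * m ≤ r * ‖w‖ := by
  have hr : 0 ≤ r := Metric.nonempty_closedBall.1 ⟨w, hw⟩
  have hm : 0 ≤ m := hr.trans hrm
  have hdisc : (w.re - m) ^ 2 + w.im ^ 2 ≤ r ^ 2 := by
    have hsq := pow_le_pow_left₀ (norm_nonneg _) (mem_closedBall_iff_norm.1 hw) 2
    simpa [Complex.sq_norm, normSq_apply, ← sq] using hsq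
  have hmr : 0 ≤ m ^ 2 - r ^ 2 := sub_nonneg.2 (pow_le_pow_left₀ hr hrm 2)
  refine (sq_le_sq₀ (by positivity) (by positivity)).1 ?_
  calc
    (|w.im| * m) ^ 2 = r ^ 2 * w.im ^ 2 + (m ^ 2 - r ^ 2) * w.im ^ 2 := by
      rw [mul_pow, sq_abs]
      ring
    _ ≤ r ^ 2 * w.im ^ 2 + (m ^ 2 - r ^ 2) * (r ^ 2 - (w.re - m) ^ 2) := by
      gcongr
      linarith
    _ = r ^ 2 * (w.re ^ 2 + w.im ^ 2) - (m * w.re - (m ^ 2 - r ^ 2)) ^ 2 := by ring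
    _ ≤ r ^ 2 * (w.re ^ 2 + w.im ^ 2) := sub_le_self _ (sq_nonneg _)
    _ = (r * ‖w‖) ^ 2 := by
      rw [mul_pow, Complex.sq_norm, normSq_apply, ← sq, ← sq]

theorem abs_arg_le_arcsin_of_mem_closedBall {m r : ℝ} {w : ℂ} (hm : 0 < m) (hrm : r ≤ m)
    (hw : w ∈ Metric.closedBall (m : ℂ) r) : |arg w| ≤ Real.arcsin (r / m) := by
  have hr : 0 ≤ r := Metric.nonempty_closedBall.1 ⟨w, hw⟩
  have hre : 0 ≤ w.re := by
    have h := (abs_re_le_norm (w - m)).trans (mem_closedBall_iff_norm.1 hw)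
    rw [sub_re, ofReal_re] at h
    linarith [neg_le_of_abs_le h]
  have hsin : |w.im / ‖w‖| ≤ r / m := by
    rw [abs_div, abs_norm]
    refine div_le_of_le_mul₀ (norm_nonneg w) (by positivity) ?_
    rw [div_mul_eq_mul_div, le_div_iff₀ hm]
    exact abs_im_mul_le_mul_norm_of_mem_closedBall hrm hw
  obtain ⟨hlower, hupper⟩ := abs_le.1 hsin
  rw [arg_of_re_nonneg hre, abs_le, ← Real.arcsin_neg]
  exact ⟨Real.arcsin_le_arcsin hlower, Real.arcsin_le_arcsin hupper⟩

theorem norm_log_le_sqrt_of_mem_closedBall {p q : ℝ} {w : ℂ} (hp : 0 < p) (hq : 0 < q)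
    (hw : w ∈ Metric.closedBall (((p + q) / 2 : ℝ) : ℂ) (|p - q| / 2)) :
    ‖log w‖ ≤ √(Real.log (max (max p q) (max (1 / p) (1 / q))) ^ 2 +
      Real.arcsin (|p - q| / (p + q)) ^ 2) := by
  have hm : 0 < (p + q) / 2 := by positivity
  have hrm : |p - q| / 2 ≤ (p + q) / 2 := by
    have habs : |p - q| ≤ p + q := abs_le.2 ⟨by linarith, by linarith⟩
    gcongr
  have hlog : |Real.log ‖w‖| ≤ Real.log (max (max p q) (max (1 / p) (1 / q))) :=
    abs_log_le_log_max_of_mem_uIcc hp hq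
      (norm_mem_uIcc_of_mem_closedBall ((norm_real _).trans (Real.norm_of_nonneg hm.le)) hw)
  have harg : |arg w| ≤ Real.arcsin (|p - q| / (p + q)) := by
    simpa only [div_div_div_cancel_right₀ (two_ne_zero' ℝ)] using
      abs_arg_le_arcsin_of_mem_closedBall hm hrm hw
  rw [norm_eq_sqrt_sq_add_sq, log_re, log_im, ← sq_abs (Real.log ‖w‖), ← sq_abs (arg w)]
  gcongr

theorem norm_cpow_le_exp_norm_mul_norm_log (w t : ℂ) :
    ‖w ^ t‖ ≤ Real.exp (‖t‖ * ‖log w‖) := by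
  rcases eq_or_ne w 0 with rfl | hw
  · rcases eq_or_ne t 0 with rfl | ht
    · simp
    · simp [zero_cpow ht]
  · rw [cpow_def_of_ne_zero hw, mul_comm ‖t‖, ← norm_mul]
    exact norm_exp_le_exp_norm _

theorem stmt8_general (a b c d : ℝ) (hac : 0 < a + c) (hbd : 0 < b + d) (C θ : ℝ)
    (hC : C = max (max (a + c) (b + d)) (max (1 / (a + c)) (1 / (b + d))))
    (hθ : θ = Real.arcsin (|a + c - b - d| / (a + b + c + d))) :
    ∀ z ∈ Metric.closedBall ((1 : ℂ) / 2) (1 / 2), ∀ t : ℂ,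
      ‖wC a b c d z ^ t‖ ≤ Real.exp (‖t‖ * √(Real.log C ^ 2 + θ ^ 2)) := by
  intro z hz t
  have hdiff : a + c - b - d = a + c - (b + d) := by ring
  have hsum : a + b + c + d = a + c + (b + d) := by ring
  have hw : wC a b c d z ∈
      Metric.closedBall (((a + c + (b + d)) / 2 : ℝ) : ℂ) (|a + c - (b + d)| / 2) := by
    rw [Metric.mem_closedBall, ← wC_one_half, dist_wC, hdiff, div_eq_mul_one_div |_|]
    exact mul_le_mul_of_nonneg_left (Metric.mem_closedBall.1 hz) (abs_nonneg _)
  have hlog : ‖log (wC a b c d z)‖ ≤ √(Real.log C ^ 2 + θ ^ 2) := by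
    rw [hC, hθ, hdiff, hsum]
    exact norm_log_le_sqrt_of_mem_closedBall hac hbd hw
  calc
    ‖wC a b c d z ^ t‖ ≤ Real.exp (‖t‖ * ‖log (wC a b c d z)‖) :=
      norm_cpow_le_exp_norm_mul_norm_log _ t
    _ ≤ Real.exp (‖t‖ * √(Real.log C ^ 2 + θ ^ 2)) := by gcongr

theorem stmt8 (a b c d : ℝ) (ha : 0 < a) (hb : 0 < b) (hc : 0 < c) (hd : 0 < d)
    (C θ : ℝ)
    (hC : C = max (max (a + c) (b + d)) (max (1 / (a + c)) (1 / (b + d))))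
    (hθ : θ = Real.arcsin (|a + c - b - d| / (a + b + c + d))) :
    ∀ z ∈ Metric.ball ((1 : ℂ) / 2) (1 / 2), ∀ t : ℂ,
      ‖wC a b c d z ^ t‖ ≤
        Real.exp (‖t‖ * Real.sqrt ((Real.log C) ^ 2 + θ ^ 2)) := by
  intro z hz t
  exact stmt8_general a b c d (add_pos ha hc) (add_pos hb hd) C θ hC hθ z
    (Metric.ball_subset_closedBall hz) t
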